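/- For every integer t with 1 ≤ t ≤ 16 there exists a linear code over the field with 32 elements of length 64, dimension 3t, minimum distance at least 64 − 4t, and locality 3. In particular (t = 14), there exists a linear code over the field with 32 elements of length 64, dimension 42, minimum distance at least 8, and locality 3. -/

import Mathlib

/-!
With `U = x² + x` and `V = y² + y` the quartic becomes the conic
`U² + U V + α³ V² + V + α²⁶ = 0`. Translating `x` by `α⁹` and `y` by `α⁴` moves the rational point
`(α²⁵, α¹⁴)` of this conic to the origin, and the lines through that point parametrize the conic.
The curve is then a Klein four cover of the line with parameter `w`, and sixteen rational values of
`w` split completely, giving the 64 points.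

The code consists of the values of `f₀(w) + f₁(w) x + f₂(w) y` with `deg fᵢ < t`. Up to a
denominator, the norm of this function to the field of rational functions in `w` is a polynomial of
degree at most `4 t`, whose root at a split value `w` has multiplicity at least the number of zeros
in the fibre. The four points of a fibre differ by the translations of `x` and `y` by `1`, so in
characteristic 2 the four values over `w` add up to zero and any three of them determine the
fourth.
-/

open Polynomial

/-- `C` is a locally recoverable code, indexed by the coordinates `κ`, of dimension `k`, minimum
distance at least `d` and locality `r`. -/
structure IsLRC {F κ : Type*} [Field F] (C : Submodule F (κ → F)) (k d r : ℕ) : Prop where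
  finrank_eq : Module.finrank F C = k
  le_weight : ∀ x ∈ C, x ≠ 0 → d ≤ Nat.card {j // x j ≠ 0}
  locality : ∀ j, ∃ I : Finset κ, j ∉ I ∧ I.card ≤ r ∧
    ∀ x ∈ C, ∀ y ∈ C, (∀ i ∈ I, x i = y i) → x j = y j

theorem IsLRC.reindex {F κ κ' : Type*} [Field F] {C : Submodule F (κ → F)} {k d r : ℕ}
    (hC : IsLRC C k d r) (e : κ' ≃ κ) :
    IsLRC (C.map (LinearEquiv.funCongrLeft F F e).toLinearMap) k d r where
  finrank_eq := (LinearEquiv.finrank_map_eq _ C).trans hC.finrank_eq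
  le_weight := by
    rintro _ ⟨x, hx, rfl⟩ hne
    have hx0 : x ≠ 0 := by
      rintro rfl
      exact hne (map_zero _)
    exact (hC.le_weight x hx hx0).trans_eq
      (Nat.card_congr (e.subtypeEquiv fun _ => Iff.rfl)).symm
  locality j := by
    obtain ⟨I, hj, hI, hrec⟩ := hC.locality (e j)
    refine ⟨I.map e.symm.toEmbedding, ?_, (I.card_map _).trans_le hI, ?_⟩
    · simpa [Finset.mem_map_equiv] using hj
    · rintro _ ⟨x, hx, rfl⟩ _ ⟨y, hy, rfl⟩ h
      refine hrec x hx y hy fun i hi => ?_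
      simpa using h (e.symm i) (by simpa using hi)

section Norm

variable {R : Type*} [CommRing R]

/-- `q` times the norm of `a + b z` where `q (z² + z) = w`, in characteristic 2; multiplying by `q`
clears the denominator. -/
def quadNorm (q w a b : R) : R := q * (a ^ 2 + a * b) + w * b ^ 2

/-- `q²` times the norm of `f₀ + f₁ x + f₂ y` where `q (x² + x) = u` and `q (y² + y) = v`, in
characteristic 2. Eliminating `y` first leaves `A + q D x`, with
`A = quadNorm q v f₀ f₂ + u f₁²` and `D = f₁ (f₁ + f₂)`. -/
def biquadNorm (q u v f₀ f₁ f₂ : R) : R :=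
  (quadNorm q v f₀ f₂ + u * f₁ ^ 2) ^ 2
    + q * (quadNorm q v f₀ f₂ + u * f₁ ^ 2) * (f₁ * (f₁ + f₂)) + q * u * (f₁ * (f₁ + f₂)) ^ 2

theorem mul_biquadNorm (q u v f₀ f₁ f₂ : R) :
    q * biquadNorm q u v f₀ f₁ f₂ =
      quadNorm q u (quadNorm q v f₀ f₂ + u * f₁ ^ 2) (q * (f₁ * (f₁ + f₂))) := by
  unfold biquadNorm quadNorm
  ring

theorem quadNorm_eq_zero_iff [IsDomain R] [UniqueFactorizationMonoid R] {q w : R} (hq : Prime q)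
    (hw : ¬q ∣ w) {a b : R} : quadNorm q w a b = 0 ↔ a = 0 ∧ b = 0 := by
  refine ⟨fun h => ?_, fun ⟨ha, hb⟩ => by simp [quadNorm, ha, hb]⟩
  by_cases hb : b = 0
  · simp_all [quadNorm, hq.ne_zero]
  obtain ⟨a', b', c, hrel, rfl, rfl⟩ :=
    UniqueFactorizationMonoid.exists_reduced_factors' a b hb
  have hred : q * (a' ^ 2 + a' * b') = -(w * b' ^ 2) := by
    have hc : c ^ 2 ≠ 0 := pow_ne_zero 2 (left_ne_zero_of_mul hb)
    refine mul_left_cancel₀ hc ?_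
    unfold quadNorm at h
    linear_combination h
  have hqb : q ∣ b' := hq.dvd_of_dvd_pow <|
    (hq.dvd_or_dvd (dvd_neg.1 ⟨_, hred.symm⟩)).resolve_left hw
  obtain ⟨b'', rfl⟩ := hqb
  have hqa : q ∣ a' := by
    refine hq.dvd_of_dvd_pow (n := 2) ⟨-(w * b'' ^ 2) - a' * b'', ?_⟩
    refine mul_left_cancel₀ hq.ne_zero ?_
    linear_combination hred
  exact absurd (hrel hqa (dvd_mul_right q b'')) hq.not_isUnit

theorem eq_zero_of_biquadNorm_eq_zero [IsDomain R] [UniqueFactorizationMonoid R]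
    {q u v f₀ f₁ f₂ : R} (hq : Prime q) (hu : ¬q ∣ u) (hv : ¬q ∣ v) (huv : ¬q ∣ u + v)
    (h : biquadNorm q u v f₀ f₁ f₂ = 0) : f₀ = 0 ∧ f₁ = 0 ∧ f₂ = 0 := by
  obtain ⟨hA, hD⟩ := (quadNorm_eq_zero_iff hq hu).1
    ((mul_biquadNorm q u v f₀ f₁ f₂).symm.trans (by rw [h, mul_zero]))
  rcases mul_eq_zero.1 ((mul_eq_zero.1 hD).resolve_left hq.ne_zero) with rfl | hf
  · obtain ⟨rfl, rfl⟩ := (quadNorm_eq_zero_iff hq hv).1 (by simpa using hA)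
    simp
  · obtain rfl := eq_neg_of_add_eq_zero_left hf
    obtain ⟨rfl, rfl⟩ := (quadNorm_eq_zero_iff (a := f₀) (b := f₂) hq huv).1 (by
      unfold quadNorm at hA ⊢
      linear_combination hA)
    simp

theorem biquadNorm_translate [CharP R 2] (q u v f₀ f₁ f₂ x y : R) :
    biquadNorm q (u + (x ^ 2 + x) * q) (v + (y ^ 2 + y) * q) (f₀ + x * f₁ + y * f₂) f₁ f₂ =
      biquadNorm q u v f₀ f₁ f₂ := by
  unfold biquadNorm quadNorm
  grind

theorem biquadNorm_eq [CharP R 2] (q u v f₀ f₁ f₂ : R) :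
    biquadNorm q u v f₀ f₁ f₂ =
      (q * f₀) ^ 2 * (f₀ ^ 2 + f₁ ^ 2 + f₁ * f₂ + f₂ ^ 2) + (u * f₁ ^ 2) ^ 2 + (v * f₂ ^ 2) ^ 2
        + q * (q * f₀ + u * f₁ + v * f₂) * (f₁ * f₂ * (f₁ + f₂)) := by
  unfold biquadNorm quadNorm
  grind

theorem dvd_biquadNorm [CharP R 2] {p q u v f₀ : R} (f₁ f₂ : R) (hu : p ∣ u) (hv : p ∣ v)
    (h₀ : p ∣ f₀) : p ∣ biquadNorm q u v f₀ f₁ f₂ := by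
  have hlin : p ∣ q * f₀ + u * f₁ + v * f₂ :=
    dvd_add (dvd_add (h₀.mul_left q) (hu.mul_right f₁)) (hv.mul_right f₂)
  rw [biquadNorm_eq]
  refine dvd_add (dvd_add (dvd_add ?_ ?_) ?_) ((hlin.mul_left q).mul_right _)
  · exact (dvd_pow (h₀.mul_left q) two_ne_zero).mul_right _
  · exact dvd_pow (hu.mul_right _) two_ne_zero
  · exact dvd_pow (hv.mul_right _) two_ne_zero

theorem sq_dvd_biquadNorm [CharP R 2] {p q u v f₀ f₁ f₂ : R} (hu : p ∣ u) (hv : p ∣ v)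
    (h₀ : p ∣ f₀) (h : p ∣ f₁ * f₂ * (f₁ + f₂)) : p ^ 2 ∣ biquadNorm q u v f₀ f₁ f₂ := by
  have hlin : p ∣ q * f₀ + u * f₁ + v * f₂ :=
    dvd_add (dvd_add (h₀.mul_left q) (hu.mul_right f₁)) (hv.mul_right f₂)
  rw [biquadNorm_eq, mul_assoc q, sq p]
  refine dvd_add (dvd_add (dvd_add ?_ ?_) ?_) ((mul_dvd_mul hlin h).mul_left q) <;>
    rw [← sq p]
  · exact (pow_dvd_pow_of_dvd (h₀.mul_left q) 2).mul_right _
  · exact pow_dvd_pow_of_dvd (hu.mul_right _) 2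
  · exact pow_dvd_pow_of_dvd (hv.mul_right _) 2

theorem pow_four_dvd_biquadNorm {p q u v f₀ f₁ f₂ : R} (h₀ : p ∣ f₀) (h₁ : p ∣ f₁)
    (h₂ : p ∣ f₂) : p ^ 4 ∣ biquadNorm q u v f₀ f₁ f₂ := by
  obtain ⟨f₀, rfl⟩ := h₀
  obtain ⟨f₁, rfl⟩ := h₁
  obtain ⟨f₂, rfl⟩ := h₂
  exact ⟨biquadNorm q u v f₀ f₁ f₂, by unfold biquadNorm quadNorm; ring⟩

open Finset Classical in
theorem pow_card_dvd_biquadNorm_of_dvd [CharP R 2] {p q u v f₀ : R} (f₁ f₂ : R) (hu : p ∣ u)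
    (hv : p ∣ v) (h₀ : p ∣ f₀) :
    p ^ #{c : Fin 2 × Fin 2 | p ∣ (c.1 : ℕ) * f₁ + (c.2 : ℕ) * f₂} ∣
      biquadNorm q u v f₀ f₁ f₂ := by
  have hcard : #{c : Fin 2 × Fin 2 | p ∣ (c.1 : ℕ) * f₁ + (c.2 : ℕ) * f₂} =
      1 + (if p ∣ f₂ then 1 else 0) +
        ((if p ∣ f₁ then 1 else 0) + if p ∣ f₁ + f₂ then 1 else 0) := by
    simp only [card_filter, Fintype.sum_prod_type, Fin.sum_univ_two]
    simp
  rw [hcard]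
  by_cases h₁ : p ∣ f₁ <;> by_cases h₂ : p ∣ f₂
  · simpa [h₁, h₂, dvd_add h₁ h₂] using pow_four_dvd_biquadNorm h₀ h₁ h₂
  · simpa [h₁, h₂, dvd_add_right h₁] using
      sq_dvd_biquadNorm hu hv h₀ ((h₁.mul_right _).mul_right _)
  · simpa [h₁, h₂, dvd_add_left h₂] using
      sq_dvd_biquadNorm hu hv h₀ ((h₂.mul_left _).mul_right _)
  · by_cases h₁₂ : p ∣ f₁ + f₂
    · simpa [h₁, h₂, h₁₂] using sq_dvd_biquadNorm hu hv h₀ (h₁₂.mul_left _)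
    · simpa [h₁, h₂, h₁₂] using dvd_biquadNorm f₁ f₂ hu hv h₀

open Finset Classical in
theorem pow_card_dvd_biquadNorm [CharP R 2] {p q u v : R} (f₀ f₁ f₂ : R) (hu : p ∣ u)
    (hv : p ∣ v) :
    p ^ #{c : Fin 2 × Fin 2 | p ∣ f₀ + (c.1 : ℕ) * f₁ + (c.2 : ℕ) * f₂} ∣
      biquadNorm q u v f₀ f₁ f₂ := by
  -- Translating one zero of the fibre to the origin reduces to the case `p ∣ f₀`.
  rcases Finset.eq_empty_or_nonempty
    ({c | p ∣ f₀ + (c.1 : ℕ) * f₁ + (c.2 : ℕ) * f₂} : Finset (Fin 2 × Fin 2)) with hS | ⟨c, hc⟩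
  · simp [hS]
  have hc : p ∣ f₀ + (c.1 : ℕ) * f₁ + (c.2 : ℕ) * f₂ := by simpa using hc
  have hcast : ∀ a : Fin 2, ((a : ℕ) : R) ^ 2 + (a : ℕ) = 0 := by
    simp [Fin.forall_fin_two, CharTwo.add_self_eq_zero]
  have htranslate := biquadNorm_translate q u v f₀ f₁ f₂ (c.1 : ℕ) (c.2 : ℕ)
  rw [hcast, hcast, zero_mul, add_zero, add_zero] at htranslate
  rw [← htranslate]
  refine (pow_dvd_pow p ?_).trans (pow_card_dvd_biquadNorm_of_dvd f₁ f₂ hu hv hc)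
  refine Finset.card_le_card_of_injOn (· - c) (fun d hd => ?_) (sub_left_injective.injOn)
  have hd : p ∣ f₀ + (d.1 : ℕ) * f₁ + (d.2 : ℕ) * f₂ := by simpa using hd
  have hsub : ∀ a b : Fin 2, (((a - b : Fin 2) : ℕ) : R) = (a : ℕ) - (b : ℕ) := by
    simp [Fin.forall_fin_two, CharTwo.neg_eq]
  simp only [coe_filter, mem_univ, true_and, Set.mem_ofPred_eq, Prod.fst_sub, Prod.snd_sub, hsub]
  convert dvd_sub hd hc using 1
  ring

end Norm

section Field
variable {F : Type*} [Field F]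

theorem sum_le_natDegree_of_pow_X_sub_C_dvd {ι : Type*} [Fintype ι] {P : F[X]} (hP : P ≠ 0)
    {s : ι → F} (hs : Function.Injective s) {m : ι → ℕ} (h : ∀ i, (X - C (s i)) ^ m i ∣ P) :
    ∑ i, m i ≤ P.natDegree := by
  have hdvd : ∏ i, (X - C (s i)) ^ m i ∣ P :=
    Finset.prod_dvd_of_coprime (fun i _ j _ hij => (pairwise_coprime_X_sub_C hs hij).pow)
      fun i _ => h i
  have hmonic : ∀ i ∈ Finset.univ, ((X - C (s i)) ^ m i).Monic := fun i _ =>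
    (monic_X_sub_C _).pow _
  simpa [natDegree_prod_of_monic _ _ hmonic] using natDegree_le_of_dvd hdvd hP

theorem natDegree_quadNorm_le {q w a b : F[X]} {k m : ℕ} (hq : q.natDegree ≤ m)
    (hw : w.natDegree ≤ m) (ha : a.natDegree ≤ k) (hb : b.natDegree ≤ k) :
    (quadNorm q w a b).natDegree ≤ 2 * k + m := by
  unfold quadNorm
  compute_degree
  omega

theorem natDegree_biquadNorm_le {q u v f₀ f₁ f₂ : F[X]} {k m : ℕ} (hq : q.natDegree ≤ m)
    (hu : u.natDegree ≤ m) (hv : v.natDegree ≤ m) (h₀ : f₀.natDegree ≤ k) (h₁ : f₁.natDegree ≤ k)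
    (h₂ : f₂.natDegree ≤ k) : (biquadNorm q u v f₀ f₁ f₂).natDegree ≤ 4 * k + 2 * m := by
  have hA : (quadNorm q v f₀ f₂ + u * f₁ ^ 2).natDegree ≤ 2 * k + m := by
    have := natDegree_quadNorm_le hq hv h₀ h₂
    compute_degree
    omega
  have hD : (f₁ * (f₁ + f₂)).natDegree ≤ 2 * k := by
    compute_degree
    omega
  unfold biquadNorm
  generalize quadNorm q v f₀ f₂ + u * f₁ ^ 2 = A at hA ⊢
  generalize f₁ * (f₁ + f₂) = D at hD ⊢
  compute_degree
  omega

open Finset in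
theorem pow_card_fibre_zeros_dvd_biquadNorm [DecidableEq F] [CharP F 2] {q u v : F[X]} {s x y : F}
    (hx : (x ^ 2 + x) * q.eval s = u.eval s) (hy : (y ^ 2 + y) * q.eval s = v.eval s)
    (f₀ f₁ f₂ : F[X]) :
    (X - C s) ^ #{c : Fin 2 × Fin 2 |
        f₀.eval s + f₁.eval s * (x + (c.1 : ℕ)) + f₂.eval s * (y + (c.2 : ℕ)) = 0} ∣
      biquadNorm q u v f₀ f₁ f₂ := by
  classical
  have hu : X - C s ∣ u + (C x ^ 2 + C x) * q := by
    simp [dvd_iff_isRoot, hx, CharTwo.add_self_eq_zero]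
  have hv : X - C s ∣ v + (C y ^ 2 + C y) * q := by
    simp [dvd_iff_isRoot, hy, CharTwo.add_self_eq_zero]
  rw [← biquadNorm_translate q u v f₀ f₁ f₂ (C x) (C y)]
  convert pow_card_dvd_biquadNorm (f₀ + C x * f₁ + C y * f₂) f₁ f₂ hu hv using 5
  simp only [dvd_iff_isRoot, IsRoot.def, eval_add, eval_mul, eval_C, eval_natCast]
  ring_nf

/-- The equations `q (x² + x) = u`, `q (y² + y) = v` define a Klein four cover of the affine line in
characteristic 2. It is encoded by ramification: the intermediate quadratic covers, generated by
`x`, `y` and `x + y`, have a simple pole of `u / q`, `v / q` and `(u + v) / q` at the prime `q`. The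
degree bounds by `m` control the pole of `x` and `y` at infinity. -/
structure IsKleinCover (q u v : F[X]) (m : ℕ) : Prop where
  prime : Prime q
  not_dvd_left : ¬q ∣ u
  not_dvd_right : ¬q ∣ v
  not_dvd_add : ¬q ∣ u + v
  natDegree_denom_le : q.natDegree ≤ m
  natDegree_left_le : u.natDegree ≤ m
  natDegree_right_le : v.natDegree ≤ m

/-- The points `(s i, x i, y i)` lie on `q (x² + x) = u`, `q (y² + y) = v` over distinct values of
the base coordinate; translating `x i` and `y i` by `1` gives the rest of the fibre over `s i`. -/
structure IsSplitFamily {ι : Type*} (q u v : F[X]) (s x y : ι → F) : Prop where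
  injective : Function.Injective s
  left (i : ι) : (x i ^ 2 + x i) * q.eval (s i) = u.eval (s i)
  right (i : ι) : (y i ^ 2 + y i) * q.eval (s i) = v.eval (s i)

variable {ι : Type*}

/-- Evaluation of `f₀ + f₁ x + f₂ y`, where the `fᵢ` are polynomials of degree less than `n` in the
base coordinate, at the points `(s i, x i + a, y i + b)` with `a, b ∈ {0, 1}`. -/
def fibreEval (s x y : ι → F) (n : ℕ) :
    (Fin 3 → degreeLT F n) →ₗ[F] (ι × Fin 2 × Fin 2 → F) where
  toFun f j := (f 0 : F[X]).eval (s j.1) + (f 1 : F[X]).eval (s j.1) * (x j.1 + (j.2.1 : ℕ)) +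
    (f 2 : F[X]).eval (s j.1) * (y j.1 + (j.2.2 : ℕ))
  map_add' f g := by
    ext j
    simp only [Pi.add_apply, Submodule.coe_add, eval_add]
    ring
  map_smul' c f := by
    ext j
    simp only [Pi.smul_apply, Submodule.coe_smul, eval_smul, smul_eq_mul, RingHom.id_apply]
    ring

theorem fibreEval_apply (s x y : ι → F) (n : ℕ) (f : Fin 3 → degreeLT F n) (i : ι)
    (c : Fin 2 × Fin 2) : fibreEval s x y n f (i, c) =
      (f 0 : F[X]).eval (s i) + (f 1 : F[X]).eval (s i) * (x i + (c.1 : ℕ)) +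
        (f 2 : F[X]).eval (s i) * (y i + (c.2 : ℕ)) :=
  rfl

theorem fibreEval_injective [Fintype ι] {s : ι → F} (hs : Function.Injective s) (x y : ι → F)
    {n : ℕ} (hn : n ≤ Fintype.card ι) : Function.Injective (fibreEval s x y n) := by
  rw [← LinearMap.ker_eq_bot, LinearMap.ker_eq_bot']
  intro f hf
  have hval (i : ι) (c : Fin 2 × Fin 2) := (fibreEval_apply s x y n f i c).symm.trans
    (congrFun hf (i, c))
  have hzero (l : Fin 3) (h : ∀ i, (f l : F[X]).eval (s i) = 0) : f l = 0 :=
    Subtype.ext <| eq_zero_of_degree_lt_of_eval_index_eq_zero Finset.univ hs.injOn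
      ((mem_degreeLT.1 (f l).2).trans_le (by simpa using hn)) fun i _ => h i
  have h₁ (i : ι) : (f 1 : F[X]).eval (s i) = 0 := by
    simpa [mul_add, add_right_comm] using (hval i (1, 0)).trans (hval i (0, 0)).symm
  have h₂ (i : ι) : (f 2 : F[X]).eval (s i) = 0 := by
    simpa [mul_add, add_assoc] using (hval i (0, 1)).trans (hval i (0, 0)).symm
  have h₀ (i : ι) : (f 0 : F[X]).eval (s i) = 0 := by
    simpa [h₁, h₂] using hval i (0, 0)
  funext l
  fin_cases l
  exacts [hzero 0 h₀, hzero 1 h₁, hzero 2 h₂]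

theorem finrank_range_fibreEval [Fintype ι] {s : ι → F} (hs : Function.Injective s) (x y : ι → F)
    {n : ℕ} (hn : n ≤ Fintype.card ι) :
    Module.finrank F (LinearMap.range (fibreEval s x y n)) = 3 * n := by
  have := (degreeLTEquiv F n).symm.finiteDimensional
  rw [LinearMap.finrank_range_of_inj (fibreEval_injective hs x y hn), Module.finrank_pi_fintype]
  simp [(degreeLTEquiv F n).finrank_eq]

theorem IsKleinCover.biquadNorm_ne_zero {q u v : F[X]} {m n : ℕ} (h : IsKleinCover q u v m)
    {f : Fin 3 → degreeLT F n} (hf : f ≠ 0) : biquadNorm q u v (f 0) (f 1) (f 2) ≠ (0 : F[X]) := by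
  intro hnorm
  obtain ⟨h₀, h₁, h₂⟩ :=
    eq_zero_of_biquadNorm_eq_zero h.prime h.not_dvd_left h.not_dvd_right h.not_dvd_add hnorm
  refine hf (funext fun l => Subtype.ext ?_)
  fin_cases l
  exacts [h₀, h₁, h₂]

open Finset Classical in
theorem card_zeros_fibreEval_le [Fintype ι] [CharP F 2] {q u v : F[X]} {m : ℕ} {s x y : ι → F}
    (h : IsKleinCover q u v m) (hs : IsSplitFamily q u v s x y) {k : ℕ}
    {f : Fin 3 → degreeLT F (k + 1)} (hf : f ≠ 0) :
    #{j | fibreEval s x y (k + 1) f j = 0} ≤ 4 * k + 2 * m := by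
  have hdeg (l : Fin 3) : (f l : F[X]).natDegree ≤ k :=
    natDegree_le_of_degree_le (mem_degreeLE.1 (degreeLT_succ_eq_degreeLE (R := F) ▸ (f l).2))
  calc #{j | fibreEval s x y (k + 1) f j = 0}
      = ∑ i, #{c | fibreEval s x y (k + 1) f (i, c) = 0} := by
        simp only [card_filter, Fintype.sum_prod_type]
    _ ≤ (biquadNorm q u v (f 0 : F[X]) (f 1) (f 2)).natDegree :=
        sum_le_natDegree_of_pow_X_sub_C_dvd (h.biquadNorm_ne_zero hf) hs.injective fun i =>
          pow_card_fibre_zeros_dvd_biquadNorm (hs.left i) (hs.right i) _ _ _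
    _ ≤ 4 * k + 2 * m := natDegree_biquadNorm_le h.natDegree_denom_le h.natDegree_left_le
        h.natDegree_right_le (hdeg 0) (hdeg 1) (hdeg 2)

theorem sum_fibreEval_eq_zero [CharP F 2] (s x y : ι → F) (n : ℕ) (f : Fin 3 → degreeLT F n)
    (i : ι) : ∑ c, fibreEval s x y n f (i, c) = 0 := by
  simp only [Fintype.sum_prod_type, Fin.sum_univ_two, fibreEval_apply, Fin.val_zero,
    Fin.val_one, Nat.cast_zero, Nat.cast_one]
  grind

open Finset in
theorem fibreEval_eq_sum_erase [CharP F 2] (s x y : ι → F) (n : ℕ) (f : Fin 3 → degreeLT F n)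
    (i : ι) (c : Fin 2 × Fin 2) :
    fibreEval s x y n f (i, c) = ∑ d ∈ univ.erase c, fibreEval s x y n f (i, d) :=
  CharTwo.add_eq_zero.1 <| (add_sum_erase univ (fun d => fibreEval s x y n f (i, d))
    (mem_univ c)).trans (sum_fibreEval_eq_zero s x y n f i)

theorem IsKleinCover.isLRC_range_fibreEval [Fintype ι] [CharP F 2] {q u v : F[X]} {m : ℕ}
    {s x y : ι → F} (h : IsKleinCover q u v m) (hs : IsSplitFamily q u v s x y) {k : ℕ}
    (hk : k < Fintype.card ι) :
    IsLRC (LinearMap.range (fibreEval s x y (k + 1))) (3 * (k + 1))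
      (4 * Fintype.card ι - (4 * k + 2 * m)) 3 where
  finrank_eq := finrank_range_fibreEval hs.injective x y hk
  le_weight := by
    classical
    rintro _ ⟨f, rfl⟩ hne
    have hf : f ≠ 0 := by
      rintro rfl
      exact hne (map_zero _)
    have hzeros := card_zeros_fibreEval_le h hs hf
    have hsplit := Finset.card_filter_add_card_filter_not (s := Finset.univ)
      fun j => fibreEval s x y (k + 1) f j = 0
    simp only [Finset.card_univ, Fintype.card_prod, Fintype.card_fin] at hsplit
    rw [Nat.card_eq_fintype_card, Fintype.card_subtype]
    simp only [ne_eq]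
    omega
  locality := by
    classical
    rintro ⟨i, c⟩
    refine ⟨(Finset.univ.erase c).map (Function.Embedding.sectR i _), by simp,
      by simp [Finset.card_erase_of_mem], ?_⟩
    rintro _ ⟨f, rfl⟩ _ ⟨g, rfl⟩ hfg
    rw [fibreEval_eq_sum_erase, fibreEval_eq_sum_erase]
    exact Finset.sum_congr rfl fun d hd => hfg _ (Finset.mem_map_of_mem _ hd)

theorem irreducible_X_sq_add_X_add_one [Fintype F] (hF : Fintype.card F % 3 = 2) :
    Irreducible (X ^ 2 + X + 1 : F[X]) := by
  have hdeg : (X ^ 2 + X + 1 : F[X]).natDegree = 2 := by compute_degree!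
  rw [irreducible_iff_roots_eq_zero_of_degree_le_three hdeg.ge (hdeg.trans_le (by norm_num)),
    Multiset.eq_zero_iff_forall_notMem]
  intro r hr
  have hr : r ^ 2 + r + 1 = 0 := by simpa using isRoot_of_mem_roots hr
  have hcard : Fintype.card F = 3 * (Fintype.card F / 3) + 2 := by omega
  have hr_cube : r ^ 3 = 1 := by linear_combination (r - 1) * hr
  have hr_sq : r ^ 2 = r := by
    have := FiniteField.pow_card r
    rwa [hcard, pow_add, pow_mul, hr_cube, one_pow, one_mul] at this
  have hr_one : r = 1 := by linear_combination hr_cube - (r + 1) * hr_sq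
  have h3 : (3 : F) = 0 := by linear_combination hr - (r + 2) * hr_one
  have h2 : (2 : F) = 0 := by
    have := Nat.cast_card_eq_zero F
    rw [hcard] at this
    simpa [h3] using this
  exact one_ne_zero (by linear_combination h3 - h2 : (1 : F) = 0)

theorem pow_thirty_one_eq_one_of_root {R : Type*} [CommRing R] (h2 : (2 : R) = 0) {α : R}
    (h : α ^ 5 + α ^ 2 + 1 = 0) : α ^ 31 = 1 := by
  grind

theorem exists_pow_five_add_sq_add_one_eq_zero [Fintype F] [CharP F 2] (hF : Fintype.card F = 32) :
    ∃ α : F, α ^ 5 + α ^ 2 + 1 = 0 := by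
  let _ : Algebra (ZMod 2) F := ZMod.algebra F 2
  set f : (ZMod 2)[X] := X ^ 5 + X ^ 2 + 1 with hf
  have hdeg : f.degree = 5 := by unfold f; compute_degree!
  have hroot : AdjoinRoot.root f ^ 5 + AdjoinRoot.root f ^ 2 + 1 = 0 := by
    simpa [hf] using AdjoinRoot.mk_self (f := f)
  have h2 : (2 : AdjoinRoot f) = 0 := by
    rw [← map_ofNat (AdjoinRoot.of f) 2, show (OfNat.ofNat 2 : ZMod 2) = 0 from rfl, map_zero]
  have hdvd : f ∣ X ^ Fintype.card F - X := by
    rw [hF, ← AdjoinRoot.mk_eq_zero]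
    simp [pow_succ (AdjoinRoot.root f) 31, pow_thirty_one_eq_one_of_root h2 hroot]
  have hne : map (algebraMap (ZMod 2) F) (X ^ Fintype.card F - X) ≠ 0 := by
    simpa using FiniteField.X_pow_card_sub_X_ne_zero F Fintype.one_lt_card
  obtain ⟨α, hα⟩ := ((FiniteField.splits_X_pow_card_sub_X 2).of_dvd hne
    (map_dvd (algebraMap (ZMod 2) F) hdvd)).exists_eval_eq_zero (by simp [hdeg])
  exact ⟨α, by simpa [hf] using hα⟩

end Field

section FieldOrderThirtyTwo

variable {F : Type*} [Field F] {α : F}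

/-- For each split value `w` of the parameter of the conic over the field with 32 elements, the
exponents of `α` in `w` and in the coordinates `x`, `y` of one point over it. They were found by
enumerating the field. -/
def splitExponents : Fin 16 → ℕ × ℕ × ℕ :=
  ![(0, 4, 6), (2, 21, 30), (3, 7, 24), (5, 24, 21), (6, 2, 20), (7, 4, 0), (8, 9, 30),
    (11, 9, 24), (13, 6, 6), (15, 0, 0), (18, 28, 21), (19, 7, 9), (21, 24, 9), (23, 21, 20),
    (24, 3, 12), (27, 28, 12)]

theorem pow_splitExponents_fst_injective [CharP F 2] (hα : α ^ 5 + α ^ 2 + 1 = 0) :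
    Function.Injective fun i => α ^ (splitExponents i).1 := by
  have hne : α ≠ 1 := by
    rintro rfl
    grind
  have : Fact (Nat.Prime 31) := ⟨by norm_num⟩
  have horder : orderOf α = 31 :=
    orderOf_eq_prime (pow_thirty_one_eq_one_of_root CharTwo.two_eq_zero hα) hne
  have hlt : ∀ i, (splitExponents i).1 < 31 := by decide
  have hinj : Function.Injective fun i => (splitExponents i).1 := by decide
  intro i j hij
  exact hinj (pow_injOn_Iio_orderOf (horder ▸ hlt i) (horder ▸ hlt j) hij)

/-- The numerator of `x² + x`, for the translated `x`, in the parametrization of the conic by the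
lines of slope `α²⁸ w + α⁴` through its rational point. This choice of the parameter `w` makes the
denominator `w² + w + 1`. -/
noncomputable def conicLeft (α : F) : F[X] := C (α ^ 21) * X + C (α ^ 5)

/-- The numerator of `y² + y`, for the translated `y`, over the same denominator. -/
noncomputable def conicRight (α : F) : F[X] := (C (α ^ 28) * X + C (α ^ 4)) * conicLeft α

theorem isSplitFamily_splitExponents [CharP F 2] (hα : α ^ 5 + α ^ 2 + 1 = 0) :
    IsSplitFamily (X ^ 2 + X + 1) (conicLeft α) (conicRight α)
      (fun i => α ^ (splitExponents i).1) (fun i => α ^ (splitExponents i).2.1)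
      fun i => α ^ (splitExponents i).2.2 where
  injective := pow_splitExponents_fst_injective hα
  left i := by
    simp only [conicLeft, eval_add, eval_mul, eval_pow, eval_X, eval_C, eval_one]
    fin_cases i <;> simp only [splitExponents, Fin.zero_eta, Fin.mk_one, Fin.reduceFinMk,
      Matrix.cons_val_zero, Matrix.cons_val_one, Matrix.cons_val] <;> grind
  right i := by
    simp only [conicLeft, conicRight, eval_add, eval_mul, eval_pow, eval_X, eval_C, eval_one]
    fin_cases i <;> simp only [splitExponents, Fin.zero_eta, Fin.mk_one, Fin.reduceFinMk,
      Matrix.cons_val_zero, Matrix.cons_val_one, Matrix.cons_val] <;> grind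

theorem not_dvd_linear {q : F[X]} (hq : 1 < q.natDegree) {a : F} (ha : a ≠ 0) (b : F) :
    ¬q ∣ C a * X + C b :=
  not_dvd_of_natDegree_lt (ne_zero_of_natDegree_gt (natDegree_linear ha).ge)
    ((natDegree_linear ha).trans_lt hq)

theorem isKleinCover_conic (hα : α ≠ 0) (hq : Irreducible (X ^ 2 + X + 1 : F[X])) :
    IsKleinCover (X ^ 2 + X + 1) (conicLeft α) (conicRight α) 2 := by
  have hdeg : 1 < (X ^ 2 + X + 1 : F[X]).natDegree :=
    one_lt_two.trans_eq (Eq.symm (by compute_degree!))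
  have hleft : ¬X ^ 2 + X + 1 ∣ conicLeft α := not_dvd_linear hdeg (pow_ne_zero 21 hα) _
  have hslope (b : F) := not_dvd_linear hdeg (pow_ne_zero 28 hα) b
  refine ⟨hq.prime, hleft, hq.prime.not_dvd_mul (hslope _) hleft, ?_, ?_, ?_, ?_⟩
  · have hadd : conicLeft α + conicRight α =
        (C (α ^ 28) * X + C (α ^ 4 + 1)) * conicLeft α := by
      simp only [conicRight, map_add, map_one]
      ring
    exact hadd ▸ hq.prime.not_dvd_mul (hslope _) hleft
  · compute_degree!
  · exact natDegree_linear_le.trans one_le_two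
  · exact natDegree_mul_le_of_le natDegree_linear_le natDegree_linear_le

theorem exists_isLRC_of_card_eq_thirtyTwo [Fintype F] [CharP F 2] (hF : Fintype.card F = 32) {k : ℕ}
    (hk : k < 16) :
    ∃ C : Submodule F (Fin 64 → F), IsLRC C (3 * (k + 1)) (64 - 4 * (k + 1)) 3 := by
  obtain ⟨α, hα⟩ := exists_pow_five_add_sq_add_one_eq_zero hF
  have hα₀ : α ≠ 0 := by
    rintro rfl
    simp at hα
  have hq := irreducible_X_sq_add_X_add_one (F := F) (by rw [hF])
  have e : Fin 64 ≃ Fin 16 × Fin 2 × Fin 2 := Fintype.equivOfCardEq (by simp)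
  have hC := (isKleinCover_conic hα₀ hq).isLRC_range_fibreEval (isSplitFamily_splitExponents hα)
    (k := k) (by simpa using hk)
  exact ⟨_, by simpa [mul_add] using hC.reindex e⟩

end FieldOrderThirtyTwo

theorem exists_LRC_F32_length64 :
    ∀ t : ℕ, 1 ≤ t → t ≤ 16 →
      ∃ C : Submodule (GaloisField 2 5) (Fin 64 → GaloisField 2 5),
        Module.finrank (GaloisField 2 5) C = 3 * t ∧
        (∀ x : Fin 64 → GaloisField 2 5, x ∈ C → x ≠ 0 →
          64 - 4 * t ≤ Nat.card {i : Fin 64 // x i ≠ 0}) ∧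
        (∀ i : Fin 64, ∃ I : Finset (Fin 64), i ∉ I ∧ I.card ≤ 3 ∧
          ∀ x ∈ C, ∀ y ∈ C, (∀ j ∈ I, x j = y j) → x i = y i) := by
  intro t ht1 ht16
  obtain ⟨k, rfl⟩ := Nat.exists_eq_add_of_le' ht1
  have := Fintype.ofFinite (GaloisField 2 5)
  have hcard : Fintype.card (GaloisField 2 5) = 32 := by
    rw [Fintype.card_eq_nat_card, GaloisField.card 2 5 (by norm_num)]
    norm_num
  obtain ⟨C, hC⟩ := exists_isLRC_of_card_eq_thirtyTwo hcard (k := k) (by omega)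
  exact ⟨C, hC.finrank_eq, hC.le_weight, hC.locality⟩
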